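/- Let K be an algebraically closed field and N ≥ 4. In the polynomial ring K[S_{ij} : 1 ≤ i < j ≤ N], the ideal generated by all Plücker relations S_{ij}S_{kl} − S_{ik}S_{jl} + S_{il}S_{jk} for 1 ≤ i < j < k < l ≤ N is a prime ideal. -/

import Mathlib

open MvPolynomial

/-- The index set of the polynomial ring `K[S_{ij} : 1 ≤ i < j ≤ N]`. -/
abbrev PairIdx (N : ℕ) : Type := {p : ℕ × ℕ // 1 ≤ p.1 ∧ p.1 < p.2 ∧ p.2 ≤ N}

/-- The variable `S_{ab}` of `K[S_{ij} : 1 ≤ i < j ≤ N]` (junk value `0` for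
invalid index pairs). -/
noncomputable def S (K : Type*) [Field K] (N a b : ℕ) :
    MvPolynomial (PairIdx N) K :=
  if h : 1 ≤ a ∧ a < b ∧ b ≤ N then X ⟨(a, b), h⟩ else 0

/-!
Over any commutative ring the Plücker ideal is the kernel of the map sending `S_{ij}` to the
`2 × 2` minor of the columns `i`, `j` of a generic `2 × N` matrix; over a domain it is therefore
prime. Call a monomial standard if no two of its variables `S_{il}`, `S_{jk}` are nested, that is,
satisfy `i < j < k < l`. The Plücker relations rewrite a nested product as
`S_{ik}S_{jl} - S_{ij}S_{kl}`, which lowers the sum of the squared lengths `(j - i)²` of the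
intervals occurring in the monomial, so standard monomials span modulo the Plücker ideal. Their
images are linearly independent: the leading term of a product of minors records the multiset of
left endpoints and the multiset of right endpoints, and these two multisets determine a family
without nested pairs.
-/

section MonovaryingFamilies

variable {σ α β M : Type*}

theorem exists_lt_of_mapDomain_eq [AddCommMonoid M] [LinearOrder M] [IsOrderedCancelAddMonoid M]
    {f : σ → α} {d e : σ →₀ M} (h : d.mapDomain f = e.mapDomain f) {p : σ} (hp : e p < d p) :
    ∃ q, f q = f p ∧ d q < e q := by
  classical
  by_contra! hle
  have sum_fiber (c : σ →₀ M) (hc : c.support ⊆ d.support ∪ e.support) :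
      c.mapDomain f (f p) = ∑ q ∈ d.support ∪ e.support with f q = f p, c q := by
    rw [Finsupp.mapDomain_apply_eq_sum]
    exact Finset.sum_subset (Finset.filter_subset_filter _ hc) (by simp_all)
  have hp_mem : p ∈ d.support ∪ e.support := by
    by_contra hp_notMem
    simp_all
  have sum_lt : e.mapDomain f (f p) < d.mapDomain f (f p) := by
    rw [sum_fiber d Finset.subset_union_left, sum_fiber e Finset.subset_union_right]
    exact Finset.sum_lt_sum (fun q hq ↦ hle q (Finset.mem_filter.mp hq).2)
      ⟨p, Finset.mem_filter.mpr ⟨hp_mem, rfl⟩, hp⟩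
  exact sum_lt.ne (by rw [h])

variable [LinearOrder α] [LinearOrder β] {f : σ → α} {g : σ → β} {d e : σ →₀ ℕ}

theorem not_lt_of_monovaryOn_of_lex_minimal (hfg : Function.Injective fun p ↦ (f p, g p))
    (he : MonovaryOn g f e.support) (hf : d.mapDomain f = e.mapDomain f)
    (hg : d.mapDomain g = e.mapDomain g) {p : σ}
    (hmin : ∀ q, d q ≠ e q → toLex (f p, g p) ≤ toLex (f q, g q)) : ¬ e p < d p := by
  intro hp
  obtain ⟨q, hqf, hq⟩ := exists_lt_of_mapDomain_eq hf hp
  obtain ⟨r, hrg, hr⟩ := exists_lt_of_mapDomain_eq hg hp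
  have ne_p {s : σ} (hs : d s < e s) : (f s, g s) ≠ (f p, g p) := fun h ↦
    hs.not_gt (hfg h ▸ hp)
  have hgq : g p < g q := by
    have := Prod.Lex.toLex_le_toLex.mp (hmin q hq.ne)
    have := ne_p hq
    grind
  have hfr : f p < f r := by
    have := Prod.Lex.toLex_le_toLex.mp (hmin r hr.ne)
    have := ne_p hr
    grind
  have hqr : g q ≤ g r := he (by simpa using hq.ne_bot) (by simpa using hr.ne_bot) (hqf ▸ hfr)
  exact (hgq.trans_le hqr).ne' hrg

theorem eq_of_mapDomain_eq_of_monovaryOn (hfg : Function.Injective fun p ↦ (f p, g p))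
    (hd : MonovaryOn g f d.support) (he : MonovaryOn g f e.support)
    (hf : d.mapDomain f = e.mapDomain f) (hg : d.mapDomain g = e.mapDomain g) : d = e := by
  by_contra hne
  have finite_ne : {p | d p ≠ e p}.Finite :=
    (d.support.finite_toSet.union e.support.finite_toSet).subset fun p hp ↦ by
      by_contra hp_notMem
      simp_all
  obtain ⟨p, hp, hmin⟩ := Set.exists_min_image _ (fun p ↦ toLex (f p, g p)) finite_ne
    (Finsupp.ne_iff.mp hne)
  rcases lt_or_gt_of_ne hp with hlt | hlt
  · exact not_lt_of_monovaryOn_of_lex_minimal hfg hd hf.symm hg.symm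
      (fun q hq ↦ hmin q hq.symm) hlt
  · exact not_lt_of_monovaryOn_of_lex_minimal hfg he hf hg hmin hlt

end MonovaryingFamilies

section StandardMonomials

variable {σ τ R : Type*} [CommSemiring R]

theorem restrictSupport_sup_eq_top {γ : Type*} [Preorder γ] [WellFoundedLT γ]
    (μ : (σ →₀ ℕ) → γ) {T : Set (σ →₀ ℕ)} {I : Submodule R (MvPolynomial σ R)}
    (h : ∀ d ∉ T, monomial d 1 ∈ restrictSupport R {e | μ e < μ d} ⊔ I) :
    restrictSupport R T ⊔ I = ⊤ := by
  have monomial_mem (d : σ →₀ ℕ) : monomial d 1 ∈ restrictSupport R T ⊔ I := by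
    induction hn : μ d using WellFoundedLT.induction generalizing d with
    | ind n ih =>
      by_cases hd : d ∈ T
      · exact Submodule.mem_sup_left ((monomial_mem_restrictSupport R).mpr (.inl hd))
      · suffices hle : restrictSupport R {e | μ e < μ d} ≤ restrictSupport R T ⊔ I from
          sup_le hle le_sup_right (h d hd)
        rw [restrictSupport_eq_span, Submodule.span_le]
        rintro _ ⟨e, he, rfl⟩
        exact ih (μ e) (hn ▸ he) e rfl
  rw [eq_top_iff, ← restrictSupport_univ, restrictSupport_eq_span, Submodule.span_le]
  rintro _ ⟨d, -, rfl⟩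
  exact monomial_mem d

open scoped MonomialOrder

variable {m : MonomialOrder τ} {g : σ → MvPolynomial τ R}

theorem monic_aeval_monomial (hg : ∀ p, m.Monic (g p)) (d : σ →₀ ℕ) :
    m.Monic (aeval g (monomial d (1 : R))) := by
  rw [aeval_monomial, map_one, one_mul]
  exact .prod fun p _ ↦ (hg p).pow

theorem degree_aeval_monomial [Nontrivial R] (hg : ∀ p, m.Monic (g p)) (d : σ →₀ ℕ) :
    m.degree (aeval g (monomial d (1 : R))) = d.weight fun p ↦ m.degree (g p) := by
  rw [aeval_monomial, map_one, one_mul, Finsupp.prod, MonomialOrder.degree_prod_of_regular]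
  · refine Finset.sum_congr rfl fun p _ ↦
      MonomialOrder.degree_pow_of_pow_leadingCoeff_ne_zero ?_
    simp [(hg p).leadingCoeff_eq_one]
  · intro p _
    simp [((hg p).pow).leadingCoeff_eq_one, isRegular_one]

theorem coeff_weight_aeval_of_forall_lt (hg : ∀ p, m.Monic (g p)) {w : MvPolynomial σ R}
    {d : σ →₀ ℕ} (hd : ∀ e ∈ w.support, e ≠ d →
      (e.weight fun p ↦ m.degree (g p)) ≺[m] d.weight fun p ↦ m.degree (g p)) :
    (aeval g w).coeff (d.weight fun p ↦ m.degree (g p)) = w.coeff d := by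
  nontriviality R
  have aeval_eq_sum : aeval g w = ∑ e ∈ w.support, w.coeff e • aeval g (monomial e (1 : R)) := by
    conv_lhs => rw [w.as_sum, map_sum]
    simp only [aeval_monomial, map_one, one_mul, Algebra.smul_def]
  rw [aeval_eq_sum, coeff_sum, Finset.sum_eq_single d]
  · rw [coeff_smul, ← degree_aeval_monomial hg, (monic_aeval_monomial hg d).coeff_degree,
      smul_eq_mul, mul_one]
  · intro e he hne
    rw [coeff_smul, m.coeff_eq_zero_of_lt, smul_zero]
    rw [degree_aeval_monomial hg]
    exact hd e he hne
  · intro hd_notMem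
    rw [notMem_support_iff.mp hd_notMem, zero_smul, coeff_zero]

theorem disjoint_restrictSupport_ker_aeval (hg : ∀ p, m.Monic (g p)) {T : Set (σ →₀ ℕ)}
    (hT : T.InjOn (Finsupp.weight fun p ↦ m.degree (g p))) :
    Disjoint (restrictSupport R T) ((RingHom.ker (aeval g)).restrictScalars R) := by
  rw [Submodule.disjoint_def]
  intro w hwT hw
  by_contra hne
  obtain ⟨d, hd, hmax⟩ := Finset.exists_max_image w.support
    (fun d ↦ m.toSyn (d.weight fun p ↦ m.degree (g p))) (support_nonempty.mpr hne)
  have weight_lt : ∀ e ∈ w.support, e ≠ d →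
      (e.weight fun p ↦ m.degree (g p)) ≺[m] d.weight fun p ↦ m.degree (g p) :=
    fun e he hne ↦ (hmax e he).lt_of_ne fun heq ↦
      hne (hT (hwT he) (hwT hd) (m.toSyn.injective heq))
  have aeval_eq_zero : aeval g w = 0 := hw
  apply mem_support_iff.mp hd
  rw [← coeff_weight_aeval_of_forall_lt hg weight_lt, aeval_eq_zero, coeff_zero]

end StandardMonomials

section GenericMinors

open Sum

variable {ι : Type*}

/-- The `2 × 2` minor of the columns `i` and `j` of the generic `2 × ι` matrix. The entries of the
first row are the variables `inlₗ i` and those of the second row the variables `inrₗ i`, so that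
the lexicographic monomial order ranks the first row above the second. -/
noncomputable def genericMinor (R : Type*) [CommRing R] (i j : ι) : MvPolynomial (ι ⊕ₗ ι) R :=
  X (inlₗ i) * X (inrₗ j) - X (inlₗ j) * X (inrₗ i)

variable {R : Type*} [CommRing R]

theorem genericMinor_plucker (i j k l : ι) :
    genericMinor R i j * genericMinor R k l - genericMinor R i k * genericMinor R j l
      + genericMinor R i l * genericMinor R j k = 0 := by
  simp only [genericMinor]
  ring

/-- The exponent vector of the product of the entries `(1, i)` and `(2, j)` of the generic matrix,
which for `i < j` is the diagonal term of the minor of the columns `i` and `j`. -/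
noncomputable def diagonalExponent (i j : ι) : (ι ⊕ₗ ι) →₀ ℕ :=
  Finsupp.single (inlₗ i) 1 + Finsupp.single (inrₗ j) 1

theorem genericMinor_eq_monomial_sub_monomial (i j : ι) : genericMinor R i j =
    monomial (diagonalExponent i j) 1 - monomial (diagonalExponent j i) 1 := by
  simp only [genericMinor, diagonalExponent, X, monomial_mul, one_mul]

theorem weight_diagonalExponent_inl {σ : Type*} (f g : σ → ι) (d : σ →₀ ℕ) (i : ι) :
    (d.weight fun p ↦ diagonalExponent (f p) (g p)) (inlₗ i) = d.mapDomain f i := by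
  classical
  simp [Finsupp.weight_apply, Finsupp.mapDomain, diagonalExponent, Finsupp.sum,
    Finsupp.single_apply]

theorem weight_diagonalExponent_inr {σ : Type*} (f g : σ → ι) (d : σ →₀ ℕ) (j : ι) :
    (d.weight fun p ↦ diagonalExponent (f p) (g p)) (inrₗ j) = d.mapDomain g j := by
  classical
  simp [Finsupp.weight_apply, Finsupp.mapDomain, diagonalExponent, Finsupp.sum,
    Finsupp.single_apply]

open scoped MonomialOrder

variable [LinearOrder ι] [WellFoundedGT (ι ⊕ₗ ι)]

theorem diagonalExponent_swap_lex_lt {i j : ι} (hij : i < j) :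
    diagonalExponent j i ≺[.lex] diagonalExponent i j := by
  rw [MonomialOrder.lex_lt_iff, Finsupp.Lex.lt_iff]
  refine ⟨inlₗ i, fun x hx ↦ ?_, ?_⟩
  · have hxi := hx.ne
    have hxj := (hx.trans (Lex.inl_lt_inl_iff.mpr hij)).ne
    have hxr (k : ι) : x ≠ inrₗ k := (hx.trans (Lex.inl_lt_inr i k)).ne
    simp [diagonalExponent, hxi.symm, hxj.symm, (hxr _).symm]
  · simp [diagonalExponent, hij.ne']

theorem degree_monomial_diagonalExponent_lt [Nontrivial R] {i j : ι} (hij : i < j) :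
    MonomialOrder.lex.degree (monomial (diagonalExponent j i) (1 : R)) ≺[.lex]
      MonomialOrder.lex.degree (monomial (diagonalExponent i j) (1 : R)) := by
  classical
  simpa [MonomialOrder.degree_monomial] using diagonalExponent_swap_lex_lt hij

theorem degree_genericMinor [Nontrivial R] {i j : ι} (hij : i < j) :
    MonomialOrder.lex.degree (genericMinor R i j) = diagonalExponent i j := by
  classical
  rw [genericMinor_eq_monomial_sub_monomial,
    MonomialOrder.degree_sub_of_lt (degree_monomial_diagonalExponent_lt hij),
    MonomialOrder.degree_monomial, if_neg one_ne_zero]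

theorem monic_genericMinor {i j : ι} (hij : i < j) :
    MonomialOrder.lex.Monic (genericMinor R i j) := by
  nontriviality R
  rw [MonomialOrder.Monic, genericMinor_eq_monomial_sub_monomial,
    MonomialOrder.leadingCoeff_sub_of_lt (degree_monomial_diagonalExponent_lt hij),
    MonomialOrder.leadingCoeff_monomial]

end GenericMinors

section PluckerIdeal

variable {N : ℕ}

/-- The left endpoint `i` of an index pair `(i, j)`, as a column of the generic matrix. -/
def PairIdx.fst (p : PairIdx N) : Set.Icc 1 N :=
  ⟨p.1.1, p.2.1, by omega⟩

/-- The right endpoint `j` of an index pair `(i, j)`, as a column of the generic matrix. -/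
def PairIdx.snd (p : PairIdx N) : Set.Icc 1 N :=
  ⟨p.1.2, by omega, p.2.2.2⟩

theorem PairIdx.fst_lt_snd (p : PairIdx N) : p.fst < p.snd :=
  p.2.2.1

theorem PairIdx.injective_fst_snd : Function.Injective fun p : PairIdx N ↦ (p.fst, p.snd) := by
  intro p q h
  obtain ⟨hfst, hsnd⟩ := Prod.mk.inj h
  exact Subtype.ext (Prod.ext (congrArg Subtype.val hfst) (congrArg Subtype.val hsnd))

/-- The exponent vectors of the standard monomials: no index pair in the support is strictly nested
inside another one. -/
def standardExponents (N : ℕ) : Set (PairIdx N →₀ ℕ) :=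
  {d | MonovaryOn (PairIdx.snd (N := N)) PairIdx.fst d.support}

/-- The Plücker relation of `i < j < k < l`, with coefficients in an arbitrary commutative ring. -/
noncomputable def pluckerRelation (R : Type*) [CommRing R] (i j k l : ℕ)
    (h : 1 ≤ i ∧ i < j ∧ j < k ∧ k < l ∧ l ≤ N) : MvPolynomial (PairIdx N) R :=
  X ⟨(i, j), by omega⟩ * X ⟨(k, l), by omega⟩ - X ⟨(i, k), by omega⟩ * X ⟨(j, l), by omega⟩
    + X ⟨(i, l), by omega⟩ * X ⟨(j, k), by omega⟩

/-- The ideal generated by all Plücker relations, with coefficients in an arbitrary commutative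
ring. -/
noncomputable def pluckerIdeal (R : Type*) [CommRing R] (N : ℕ) :
    Ideal (MvPolynomial (PairIdx N) R) :=
  Ideal.span {x | ∃ i j k l, ∃ h : 1 ≤ i ∧ i < j ∧ j < k ∧ k < l ∧ l ≤ N,
    x = pluckerRelation R i j k l h}

/-- The algebra map sending `S_{ij}` to the minor of the columns `i` and `j` of the generic `2 × N`
matrix. -/
noncomputable def minorMap (R : Type*) [CommRing R] (N : ℕ) :
    MvPolynomial (PairIdx N) R →ₐ[R] MvPolynomial (Set.Icc 1 N ⊕ₗ Set.Icc 1 N) R :=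
  aeval fun p ↦ genericMinor R p.fst p.snd

/-- The sum of the squared lengths of the intervals occurring in a monomial, the termination measure
of the straightening algorithm. -/
noncomputable def spread (d : PairIdx N →₀ ℕ) : ℕ :=
  d.weight fun p ↦ (p.1.2 - p.1.1) ^ 2

theorem exists_nested_of_notMem_standardExponents {d : PairIdx N →₀ ℕ}
    (hd : d ∉ standardExponents N) :
    ∃ i j k l, ∃ h : 1 ≤ i ∧ i < j ∧ j < k ∧ k < l ∧ l ≤ N, ∃ e,
      d = .single ⟨(i, l), by omega⟩ 1 + .single ⟨(j, k), by omega⟩ 1 + e := by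
  simp only [standardExponents, MonovaryOn, Set.mem_ofPred_eq, Finset.mem_coe,
    Finsupp.mem_support_iff] at hd
  push Not at hd
  obtain ⟨⟨⟨i, l⟩, hil⟩, hp, ⟨⟨j, k⟩, hjk⟩, hq, hij : i < j, hkl : k < l⟩ := hd
  refine ⟨i, j, k, l, by omega, exists_add_of_le fun r ↦ ?_⟩
  simp only [Finsupp.add_apply, Finsupp.single_apply]
  grind

theorem sq_add_sq_lt_of_crossing {i j k l : ℕ} (hij : i < j) (hjk : j < k) (hkl : k < l) :
    (k - i) ^ 2 + (l - j) ^ 2 < (l - i) ^ 2 + (k - j) ^ 2 := by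
  have hpos : (0 : ℤ) < (j - i) * (l - k) := mul_pos (by lia) (by lia)
  zify [hjk.le, (hij.trans hjk).le, (hjk.trans hkl).le, (hij.trans (hjk.trans hkl)).le]
  linear_combination 2 * hpos

theorem sq_add_sq_lt_of_disjoint {i j k l : ℕ} (hij : i < j) (hjk : j < k) (hkl : k < l) :
    (j - i) ^ 2 + (l - k) ^ 2 < (l - i) ^ 2 + (k - j) ^ 2 := by
  have := Nat.pow_lt_pow_left (show j - i < k - i by omega) two_ne_zero
  have := Nat.pow_lt_pow_left (show l - k < l - j by omega) two_ne_zero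
  have := sq_add_sq_lt_of_crossing hij hjk hkl
  omega

variable {R : Type*} [CommRing R]

theorem monomial_mem_of_notMem_standardExponents {d : PairIdx N →₀ ℕ}
    (hd : d ∉ standardExponents N) :
    monomial d 1 ∈
      restrictSupport R {e | spread e < spread d} ⊔ (pluckerIdeal R N).restrictScalars R := by
  obtain ⟨i, j, k, l, h, e, rfl⟩ := exists_nested_of_notMem_standardExponents hd
  let crossing : PairIdx N →₀ ℕ :=
    .single ⟨(i, k), by omega⟩ 1 + .single ⟨(j, l), by omega⟩ 1 + e
  let disjoint : PairIdx N →₀ ℕ :=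
    .single ⟨(i, j), by omega⟩ 1 + .single ⟨(k, l), by omega⟩ 1 + e
  rw [Submodule.mem_sup]
  refine ⟨monomial crossing 1 - monomial disjoint 1, Submodule.sub_mem _ ?_ ?_,
    pluckerRelation R i j k l h * monomial e 1,
    Ideal.mul_mem_right _ _ (Ideal.subset_span ⟨i, j, k, l, h, rfl⟩), ?_⟩
  · refine (monomial_mem_restrictSupport R).mpr (.inl ?_)
    simpa [crossing, spread, Finsupp.weight_single] using
      sq_add_sq_lt_of_crossing h.2.1 h.2.2.1 h.2.2.2.1
  · refine (monomial_mem_restrictSupport R).mpr (.inl ?_)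
    simpa [disjoint, spread, Finsupp.weight_single] using
      sq_add_sq_lt_of_disjoint h.2.1 h.2.2.1 h.2.2.2.1
  · simp only [crossing, disjoint, pluckerRelation, X, monomial_mul, one_mul, add_mul, sub_mul]
    abel

theorem restrictSupport_standardExponents_sup_pluckerIdeal :
    restrictSupport R (standardExponents N) ⊔ (pluckerIdeal R N).restrictScalars R = ⊤ :=
  restrictSupport_sup_eq_top spread fun _ ↦ monomial_mem_of_notMem_standardExponents

theorem injOn_weight_diagonalExponent_standardExponents :
    (standardExponents N).InjOn (Finsupp.weight fun p ↦ diagonalExponent p.fst p.snd) := by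
  intro d hd e he h
  refine eq_of_mapDomain_eq_of_monovaryOn PairIdx.injective_fst_snd hd he ?_ ?_
  · ext i
    rw [← weight_diagonalExponent_inl _ PairIdx.snd, h, weight_diagonalExponent_inl]
  · ext j
    rw [← weight_diagonalExponent_inr PairIdx.fst, h, weight_diagonalExponent_inr]

theorem disjoint_restrictSupport_standardExponents_ker_minorMap :
    Disjoint (restrictSupport R (standardExponents N))
      ((RingHom.ker (minorMap R N)).restrictScalars R) := by
  nontriviality R
  have monic_minor (p : PairIdx N) : MonomialOrder.lex.Monic (genericMinor R p.fst p.snd) :=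
    monic_genericMinor p.fst_lt_snd
  refine disjoint_restrictSupport_ker_aeval monic_minor ?_
  simp only [degree_genericMinor (PairIdx.fst_lt_snd _)]
  exact injOn_weight_diagonalExponent_standardExponents

theorem pluckerIdeal_le_ker_minorMap : pluckerIdeal R N ≤ RingHom.ker (minorMap R N) := by
  rw [pluckerIdeal, Ideal.span_le]
  rintro _ ⟨i, j, k, l, h, rfl⟩
  simpa [pluckerRelation, minorMap, PairIdx.fst, PairIdx.snd] using
    genericMinor_plucker (R := R) (ι := Set.Icc 1 N)
      ⟨i, by grind⟩ ⟨j, by grind⟩ ⟨k, by grind⟩ ⟨l, by grind⟩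

theorem pluckerIdeal_eq_ker_minorMap : pluckerIdeal R N = RingHom.ker (minorMap R N) := by
  apply Submodule.restrictScalars_injective R
  refine eq_of_le_of_inf_le_of_le_sup (z := restrictSupport R (standardExponents N))
    pluckerIdeal_le_ker_minorMap ?_ ?_
  · rw [disjoint_restrictSupport_standardExponents_ker_minorMap.symm.eq_bot]
    exact bot_le
  · rw [sup_comm, restrictSupport_standardExponents_sup_pluckerIdeal]
    exact le_top

theorem pluckerRelation_eq_S {K : Type*} [Field K] {i j k l : ℕ}
    (h : 1 ≤ i ∧ i < j ∧ j < k ∧ k < l ∧ l ≤ N) :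
    pluckerRelation K i j k l h =
      S K N i j * S K N k l - S K N i k * S K N j l + S K N i l * S K N j k := by
  have S_eq_X {a b : ℕ} (hab : 1 ≤ a ∧ a < b ∧ b ≤ N) : S K N a b = X ⟨(a, b), hab⟩ := dif_pos hab
  rw [pluckerRelation, S_eq_X, S_eq_X, S_eq_X, S_eq_X, S_eq_X, S_eq_X]

end PluckerIdeal

theorem stmt8_general (R : Type*) [CommRing R] [IsDomain R] (N : ℕ) :
    (pluckerIdeal R N).IsPrime := by
  rw [pluckerIdeal_eq_ker_minorMap]
  exact RingHom.ker_isPrime _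

/-- In `K[S_{ij} : 1 ≤ i < j ≤ N]` the ideal generated by all Plücker relations
`S_{ij}S_{kl} − S_{ik}S_{jl} + S_{il}S_{jk}` for `1 ≤ i < j < k < l ≤ N` is
prime. -/
theorem stmt8 (K : Type*) [Field K] [IsAlgClosed K] (N : ℕ) (hN : 4 ≤ N) :
    (Ideal.span {x : MvPolynomial (PairIdx N) K | ∃ i j k l : ℕ,
        1 ≤ i ∧ i < j ∧ j < k ∧ k < l ∧ l ≤ N ∧
        x = S K N i j * S K N k l - S K N i k * S K N j l
          + S K N i l * S K N j k}).IsPrime := by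
  simpa only [pluckerIdeal, pluckerRelation_eq_S, exists_prop, and_assoc] using stmt8_general K N
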